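/- Let n ≥ 1, ε₀ > 0, and fix constants κ, δ > 0 with 2κ < δ. Define Ĝ₀(t,r) := r^{-2}(e^{-κ r² t} − cos(rt) e^{-(δ/2) r² t}) for r > 0. Then there exist constants C₁, C₂, T > 0 (with T ≥ 2) such that for every t ≥ T: C₁ 𝒟ₙ^{(1)}(t) ≤ ( ∫_{{|ξ| ≤ ε₀}} |ξ|² |Ĝ₀(t,|ξ|)|² dξ )^{1/2} ≤ C₂ 𝒟ₙ^{(1)}(t) and C₁ 𝒟ₙ^{(2)}(t) ≤ ( ∫_{{|ξ| ≤ ε₀}} |Ĝ₀(t,|ξ|)|² dξ )^{1/2} ≤ C₂ 𝒟ₙ^{(2)}(t). -/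

import Mathlib

/-!
STATEMENT 18. Optimal two-sided estimates for the symbol
`Ĝ₀(t,r) = r⁻²(e^{-κr²t} − cos(rt)e^{-(δ/2)r²t})` of the first-order Blackstock
profile: `‖ |ξ| Ĝ₀(t,|ξ|) ‖_{L²({|ξ|≤ε₀})} ≍ 𝒟ₙ⁽¹⁾(t)` and
`‖ Ĝ₀(t,|ξ|) ‖_{L²({|ξ|≤ε₀})} ≍ 𝒟ₙ⁽²⁾(t)` for large `t`.
-/

open MeasureTheory

noncomputable section

/-- The rate `𝒟ₙ⁽¹⁾(t)`. -/
def D1rate (n : ℕ) (t : ℝ) : ℝ :=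
  if n = 1 then t ^ ((1 : ℝ) / 2)
  else if n = 2 then Real.log t ^ ((1 : ℝ) / 2)
  else t ^ ((1 : ℝ) / 2 - (n : ℝ) / 4)

/-- The rate `𝒟ₙ⁽²⁾(t)`. -/
def D2rate (n : ℕ) (t : ℝ) : ℝ :=
  if n ≤ 3 then t ^ ((2 : ℝ) - (n : ℝ) / 2)
  else if n = 4 then Real.log t ^ ((1 : ℝ) / 2)
  else t ^ ((1 : ℝ) - (n : ℝ) / 4)

/-- The radial symbol `Ĝ₀(t,r) = r⁻²(e^{-κr²t} − cos(rt) e^{-(δ/2)r²t})`. -/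
def Ghat0 (κ δ t r : ℝ) : ℝ :=
  (Real.exp (-κ * r ^ 2 * t) - Real.cos (r * t) * Real.exp (-(δ / 2) * r ^ 2 * t)) / r ^ 2

/-!
In polar coordinates both integrals become `n |B₁| ∫₀^ε₀ r^p N(t,r)² dr`, where
`N(t,r) = e^{-κr²t} − cos(rt) e^{-(δ/2)r²t}` and `p = n - 3`, respectively `p = n - 5`; so it is
enough to treat an integer exponent `p ≥ -4`. The size of `N` is governed by three facts:
`|N| ≲ (rt)²` near the origin (`symNum_sq_le_small`), `|N| ≤ 2 e^{-κr²t}` everywhere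
(`symNum_sq_le_exp`), and `N ≥ e^{-κr²t} (1 − max (cos(rt)) 0)` because `κ < δ/2`
(`exp_mul_le_symNum`).

* If `p ≤ -2`, the mass sits at `r ~ 1/t` and the integral is of order `t^{-(p+1)}`; the lower bound
  uses the interval `[2/t, 3/t]`, where the cosine is negative (`radDens_integral_singular`).
* If `p = -1`, every scale between `1/t` and `t^{-1/2}` contributes and the integral is of order
  `ln t`. For the lower bound, `(1 − max c 0)²` is minorized by an affine function of `c = cos(rt)`
  with positive constant term; that term yields the logarithm and the integral of `cos(rt)/r` stays
  bounded (`radDens_integral_critical`).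
* If `p ≥ 0`, the mass sits at `r ~ t^{-1/2}` and the integral is of order `t^{-(p+1)/2}`: the upper
  bound is a Gaussian moment, and the lower bound uses `e^{-κr²t} − e^{-(δ/2)r²t}` on
  `[t^{-1/2}, 2 t^{-1/2}]` (`radDens_integral_diffusive`).
-/

/-! ### Pointwise bounds on the numerator -/

/-- The numerator `e^{-kr²t} − cos(rt) e^{-dr²t}` of the symbol, with `d` in the role of `δ/2`. -/
def symNum (k d t r : ℝ) : ℝ :=
  Real.exp (-k * r ^ 2 * t) - Real.cos (r * t) * Real.exp (-d * r ^ 2 * t)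

/-- The weighted radial density `r^p (e^{-kr²t} − cos(rt) e^{-dr²t})²`. The integer `p` collects the
Jacobian `r^{n-1}` and the singular weight, so that it equals `n - 3` or `n - 5`. -/
def radDens (k d : ℝ) (p : ℤ) (t r : ℝ) : ℝ := r ^ p * symNum k d t r ^ 2

/-- The exponentials and the cosine are all equal to `1` at `r = 0`, so the numerator vanishes to
second order there. -/
lemma symNum_sq_le_small {k d t r : ℝ} (hk : 0 < k) (hd : 0 < d) (ht : 1 ≤ t) :
    symNum k d t r ^ 2 ≤ (k + d + 1) ^ 2 * (r * t) ^ 4 := by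
  have hrt : r ^ 2 * t ≤ (r * t) ^ 2 := by
    have : t ≤ t ^ 2 := by nlinarith
    nlinarith [sq_nonneg r]
  have h0 : 0 ≤ r ^ 2 * t := by positivity
  have ha := Real.add_one_le_exp (-k * r ^ 2 * t)
  have ha1 : Real.exp (-k * r ^ 2 * t) ≤ 1 := Real.exp_le_one_iff.2 (by nlinarith)
  have hb := Real.add_one_le_exp (-d * r ^ 2 * t)
  have hb1 : Real.exp (-d * r ^ 2 * t) ≤ 1 := Real.exp_le_one_iff.2 (by nlinarith)
  have hb0 := Real.exp_pos (-d * r ^ 2 * t)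
  have hc := Real.one_sub_sq_div_two_le_cos (x := r * t)
  have hc1 := Real.cos_le_one (r * t)
  have hkx : k * (r ^ 2 * t) ≤ k * (r * t) ^ 2 := by gcongr
  have hdx : d * (r ^ 2 * t) ≤ d * (r * t) ^ 2 := by gcongr
  have hs := sq_nonneg (r * t)
  have habs : |symNum k d t r| ≤ (k + d + 1) * (r * t) ^ 2 := by
    unfold symNum
    set a := Real.exp (-k * r ^ 2 * t)
    set b := Real.exp (-d * r ^ 2 * t)
    set c := Real.cos (r * t)
    have e1 : b * (1 - c) ≤ 1 * (1 - c) := by gcongr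
    have e2 : 0 ≤ b * (1 - c) := mul_nonneg hb0.le (by linarith)
    have hkp := mul_nonneg hk.le hs
    have hdp := mul_nonneg hd.le hs
    rw [abs_le]
    constructor <;> nlinarith
  have := pow_le_pow_left₀ (abs_nonneg _) habs 2
  rw [sq_abs] at this
  calc _ ≤ _ := this
    _ = _ := by ring

lemma symNum_sq_le_exp {k d t r : ℝ} (hkd : k < d) (ht : 0 ≤ t) :
    symNum k d t r ^ 2 ≤ 4 * Real.exp (-(2 * k * t) * r ^ 2) := by
  have h0 : 0 ≤ r ^ 2 * t := by positivity
  have hle : Real.exp (-d * r ^ 2 * t) ≤ Real.exp (-k * r ^ 2 * t) :=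
    Real.exp_le_exp.2 (by nlinarith)
  have hb0 := Real.exp_pos (-d * r ^ 2 * t)
  have hc := Real.neg_one_le_cos (r * t)
  have hc1 := Real.cos_le_one (r * t)
  have hsq : Real.exp (-(2 * k * t) * r ^ 2) = Real.exp (-k * r ^ 2 * t) ^ 2 := by
    rw [← Real.exp_nat_mul]; congr 1; push_cast; ring
  rw [hsq]
  have habs : |symNum k d t r| ≤ 2 * Real.exp (-k * r ^ 2 * t) := by
    unfold symNum
    rw [abs_le]
    constructor <;> nlinarith
  have := pow_le_pow_left₀ (abs_nonneg _) habs 2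
  rw [sq_abs] at this
  calc _ ≤ _ := this
    _ = _ := by ring

lemma symNum_sq_le_four {k d t r : ℝ} (hk : 0 < k) (hkd : k < d) (ht : 0 ≤ t) :
    symNum k d t r ^ 2 ≤ 4 := by
  have h0 : 0 ≤ k * t * r ^ 2 := by positivity
  have : Real.exp (-(2 * k * t) * r ^ 2) ≤ 1 := Real.exp_le_one_iff.2 (by nlinarith)
  linarith [symNum_sq_le_exp (r := r) hkd ht]

/-- Since `k < d`, the heat factor alone bounds the numerator from below, up to the loss `1 - cos`. -/
lemma exp_mul_le_symNum {k d t r : ℝ} (hkd : k < d) (ht : 0 ≤ t) :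
    Real.exp (-k * r ^ 2 * t) * (1 - max (Real.cos (r * t)) 0) ≤ symNum k d t r := by
  have h0 : 0 ≤ r ^ 2 * t := by positivity
  have hle : Real.exp (-d * r ^ 2 * t) ≤ Real.exp (-k * r ^ 2 * t) :=
    Real.exp_le_exp.2 (by nlinarith)
  have hb0 := Real.exp_pos (-d * r ^ 2 * t)
  unfold symNum
  rcases le_total (Real.cos (r * t)) 0 with h | h
  · rw [max_eq_right h]; nlinarith
  · rw [max_eq_left h]; nlinarith

/-! ### The radial integral: integrability and reductions -/

lemma radDens_nonneg {k d : ℝ} {p : ℤ} {t r : ℝ} (hr : 0 ≤ r) : 0 ≤ radDens k d p t r :=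
  mul_nonneg (zpow_nonneg hr _) (sq_nonneg _)

/-- Near the origin the fourth-order vanishing of `symNum ^ 2` absorbs the singular weight. -/
lemma radDens_le_small {k d : ℝ} (hk : 0 < k) (hd : 0 < d) {p : ℤ} (hp : -4 ≤ p) {t r s : ℝ}
    (ht : 1 ≤ t) (hr : 0 < r) (hrs : r ≤ s) :
    radDens k d p t r ≤ (k + d + 1) ^ 2 * t ^ 4 * s ^ (p + 4) := by
  have h1 : r ^ (p + 4) ≤ s ^ (p + 4) := zpow_le_zpow_left₀ (by omega) hr.le hrs
  have h2 : r ^ (p + 4) = r ^ p * r ^ 4 := by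
    rw [zpow_add₀ hr.ne']; norm_cast
  calc radDens k d p t r ≤ r ^ p * ((k + d + 1) ^ 2 * (r * t) ^ 4) :=
        mul_le_mul_of_nonneg_left (symNum_sq_le_small hk hd ht) (zpow_nonneg hr.le _)
    _ = (k + d + 1) ^ 2 * t ^ 4 * r ^ (p + 4) := by rw [h2]; ring
    _ ≤ _ := by gcongr

lemma radDens_intervalIntegrable {k d : ℝ} (hk : 0 < k) (hd : 0 < d) {p : ℤ} (hp : -4 ≤ p) {t a b : ℝ}
    (ht : 1 ≤ t) (ha : 0 ≤ a) (hab : a ≤ b) :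
    IntervalIntegrable (radDens k d p t) volume a b := by
  rw [intervalIntegrable_iff_integrableOn_Ioc_of_le hab]
  refine IntegrableOn.of_bound (by simp) ?_ ((k + d + 1) ^ 2 * t ^ 4 * b ^ (p + 4)) ?_
  · apply Measurable.aestronglyMeasurable
    unfold radDens symNum
    fun_prop
  · refine (ae_restrict_iff' measurableSet_Ioc).2 (Filter.Eventually.of_forall fun r hr => ?_)
    have hr0 : 0 < r := ha.trans_lt hr.1
    rw [Real.norm_of_nonneg (radDens_nonneg hr0.le)]
    exact radDens_le_small hk hd hp ht hr0 hr.2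

/-- A lower bound for the radial integral obtained from any subinterval `[a, b]`. -/
lemma integral_le_radDens {k d : ℝ} (hk : 0 < k) (hd : 0 < d) {p : ℤ} (hp : -4 ≤ p) {t a b e : ℝ}
    (ht : 1 ≤ t) (ha : 0 < a) (hab : a ≤ b) (hbe : b ≤ e) {f : ℝ → ℝ}
    (hf : IntervalIntegrable f volume a b)
    (h : ∀ r ∈ Set.Icc a b, f r ≤ radDens k d p t r) :
    ∫ r in a..b, f r ≤ ∫ r in (0 : ℝ)..e, radDens k d p t r := by
  calc _ ≤ ∫ r in a..b, radDens k d p t r :=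
        intervalIntegral.integral_mono_on hab hf
          (radDens_intervalIntegrable hk hd hp ht ha.le hab) h
    _ ≤ _ := by
        refine intervalIntegral.integral_mono_interval ha.le hab hbe ?_
          (radDens_intervalIntegrable hk hd hp ht le_rfl (ha.le.trans (hab.trans hbe)))
        refine (ae_restrict_iff' measurableSet_Ioc).2 (Filter.Eventually.of_forall fun r hr => ?_)
        exact radDens_nonneg hr.1.le

/-- The region `r ≤ 1/t`, where the oscillation is not yet visible, contributes `O(t^{-(p+1)})`. -/
lemma radDens_integral_inner {k d : ℝ} (hk : 0 < k) (hd : 0 < d) {p : ℤ} (hp : -4 ≤ p) {t : ℝ}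
    (ht : 1 ≤ t) :
    ∫ r in (0 : ℝ)..t⁻¹, radDens k d p t r ≤ (k + d + 1) ^ 2 * t ^ (-(p + 1)) := by
  have ht0 : 0 < t := by linarith
  have hi : 0 < t⁻¹ := by positivity
  calc _ ≤ ∫ r in (0 : ℝ)..t⁻¹, (k + d + 1) ^ 2 * t ^ 4 * t⁻¹ ^ (p + 4) := by
        refine intervalIntegral.integral_mono_on_of_le_Ioo hi.le
          (radDens_intervalIntegrable hk hd hp ht le_rfl hi.le) (by simp) fun r hr => ?_
        exact radDens_le_small hk hd hp ht hr.1 hr.2.le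
    _ = _ := by
        have : t ^ (-(p + 1)) = t⁻¹ * (t ^ 4 * t⁻¹ ^ (p + 4)) := by
          rw [inv_zpow', ← zpow_natCast t 4, ← zpow_add₀ ht0.ne', ← zpow_neg_one t,
            ← zpow_add₀ ht0.ne']
          congr 1; push_cast; ring
        rw [intervalIntegral.integral_const, this, smul_eq_mul]; ring

lemma radDens_integral_split {k d : ℝ} (hk : 0 < k) (hd : 0 < d) (hkd : k < d) {p : ℤ} (hp : -4 ≤ p) {t e : ℝ}
    (ht : 1 ≤ t) (hte : t⁻¹ ≤ e) :
    ∫ r in (0 : ℝ)..e, radDens k d p t r ≤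
      (k + d + 1) ^ 2 * t ^ (-(p + 1)) + 4 * ∫ r in t⁻¹..e, r ^ p := by
  have ht0 : 0 < t := by linarith
  have hi : 0 < t⁻¹ := by positivity
  rw [← intervalIntegral.integral_add_adjacent_intervals
    (radDens_intervalIntegrable hk hd hp ht le_rfl hi.le)
    (radDens_intervalIntegrable hk hd hp ht hi.le hte)]
  gcongr
  · exact radDens_integral_inner hk hd hp ht
  · rw [← intervalIntegral.integral_const_mul]
    refine intervalIntegral.integral_mono_on hte
      (radDens_intervalIntegrable hk hd hp ht hi.le hte) ?_ fun r hr => ?_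
    · apply ContinuousOn.intervalIntegrable
      rw [Set.uIcc_of_le hte]
      refine continuousOn_const.mul (continuousOn_id.zpow₀ p fun r hr => Or.inl ?_)
      exact (hi.trans_le hr.1).ne'
    · have hr0 := hi.trans_le hr.1
      unfold radDens
      rw [mul_comm 4]
      gcongr
      exact symNum_sq_le_four hk hkd ht0.le

/-! ### The three regimes of the exponent -/

/-- For `-4 ≤ p ≤ -2` the scale `r ~ 1/t` dominates. -/
lemma radDens_integral_singular {k d : ℝ} (hk : 0 < k) (hkd : k < d) {p : ℤ} (hp : -4 ≤ p)
    (hp2 : p ≤ -2) {e : ℝ} (he : 0 < e) :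
    ∃ A B T : ℝ, 0 < A ∧ 0 < B ∧ 2 ≤ T ∧ ∀ t : ℝ, T ≤ t →
      A * t ^ (-(p + 1)) ≤ ∫ r in (0 : ℝ)..e, radDens k d p t r ∧
      ∫ r in (0 : ℝ)..e, radDens k d p t r ≤ B * t ^ (-(p + 1)) := by
  have hd : 0 < d := hk.trans hkd
  refine ⟨3 ^ p * Real.exp (-(9 * k)) ^ 2, (k + d + 1) ^ 2 + 4, max 2 (3 / e), by positivity,
    by positivity, le_max_left _ _, fun t hT => ?_⟩
  have ht2 : 2 ≤ t := (le_max_left _ _).trans hT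
  have hte : 3 / e ≤ t := (le_max_right _ _).trans hT
  have ht0 : 0 < t := by linarith
  have h3 : 3 / t ≤ e := by
    rw [div_le_iff₀ he] at hte
    rw [div_le_iff₀ ht0]; linarith
  have hi : 0 < t⁻¹ := by positivity
  have hie : t⁻¹ ≤ e := by
    refine le_trans ?_ h3
    rw [inv_eq_one_div]; gcongr; norm_num
  constructor
  · -- On `[2/t, 3/t]` the argument of the cosine lies in `[2, 3]`, where the cosine is negative.
    have key := integral_le_radDens (k := k) (d := d) (p := p) (t := t) (a := 2 / t) (b := 3 / t)
      (e := e) hk hd hp (by linarith) (by positivity) (by gcongr; norm_num) h3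
      (f := fun _ => (3 / t) ^ p * Real.exp (-(9 * k)) ^ 2) (by simp) ?_
    · refine le_trans (le_of_eq ?_) key
      rw [intervalIntegral.integral_const, smul_eq_mul, div_zpow]
      have : t ^ (-(p + 1)) = t⁻¹ * (t ^ p)⁻¹ := by
        rw [zpow_neg, zpow_add_one₀ ht0.ne', mul_inv, mul_comm]
      rw [this]; field_simp; ring
    · rintro r ⟨h2r, hr3⟩
      have hr0 : 0 < r := lt_of_lt_of_le (by positivity) h2r
      have h2 : 2 ≤ r * t := (div_le_iff₀ ht0).1 h2r
      have h3' : r * t ≤ 3 := (le_div_iff₀ ht0).1 hr3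
      have hcos : Real.cos (r * t) ≤ 0 := by
        apply Real.cos_nonpos_of_pi_div_two_le_of_le
        · linarith [Real.pi_lt_four]
        · linarith [Real.pi_gt_three]
      have hlow := exp_mul_le_symNum (k := k) (d := d) (t := t) (r := r) hkd ht0.le
      rw [max_eq_right hcos, sub_zero, mul_one] at hlow
      have hexp : Real.exp (-(9 * k)) ≤ Real.exp (-k * r ^ 2 * t) := by
        apply Real.exp_le_exp.2
        have : r ^ 2 * t ≤ 9 := by
          have : r ^ 2 * t * 1 ≤ r ^ 2 * t * t := by gcongr; linarith
          nlinarith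
        nlinarith
      have hz : (3 / t) ^ p ≤ r ^ p := by
        have := zpow_le_zpow_left₀ (n := -p) (by omega) hr0.le hr3
        rw [zpow_neg, zpow_neg] at this
        exact (inv_le_inv₀ (zpow_pos hr0 _) (zpow_pos (by positivity) _)).1 this
      unfold radDens
      have := hexp.trans hlow
      gcongr
  · refine (radDens_integral_split hk hd hkd hp (by linarith) hie).trans ?_
    have hz : ∫ r in t⁻¹..e, r ^ p ≤ t ^ (-(p + 1)) := by
      rw [integral_zpow]
      · have hpow : t⁻¹ ^ (p + 1) = t ^ (-(p + 1)) := by rw [inv_zpow, zpow_neg]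
        rw [hpow]
        have hpr : (p : ℝ) ≤ -2 := by exact_mod_cast hp2
        have h1 : 0 < e ^ (p + 1) := zpow_pos he _
        have h2 : 0 < t ^ (-(p + 1)) := zpow_pos ht0 _
        rw [div_le_iff_of_neg (by linarith)]
        nlinarith
      · refine Or.inr ⟨by omega, ?_⟩
        rw [Set.uIcc_of_le hie]
        exact fun h => absurd h.1 (by linarith)
    nlinarith

/-- For `p = -1` all the scales between `1/t` and `t^{-1/2}` contribute equally, whence the
logarithm. -/
lemma radDens_integral_critical {k d : ℝ} (hk : 0 < k) (hkd : k < d) {e : ℝ} (he : 0 < e) :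
    ∃ A B T : ℝ, 0 < A ∧ 0 < B ∧ 2 ≤ T ∧ ∀ t : ℝ, T ≤ t →
      A * Real.log t ≤ ∫ r in (0 : ℝ)..e, radDens k d (-1) t r ∧
      ∫ r in (0 : ℝ)..e, radDens k d (-1) t r ≤ B * Real.log t := by
  have hd : 0 < d := hk.trans hkd
  have hlog : ∀ᶠ t : ℝ in Filter.atTop,
      max 64 ((k + d + 1) ^ 2 + 4 * Real.log e) ≤ Real.log t :=
    Real.tendsto_log_atTop.eventually_ge_atTop _
  obtain ⟨T₀, hT₀⟩ := Filter.eventually_atTop.1 hlog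
  refine ⟨Real.exp (-k) ^ 2 * (1 / 8), 5, max (max 2 T₀) (max e⁻¹ (e⁻¹ ^ 2)), by positivity,
    by norm_num, (le_max_left _ _).trans (le_max_left _ _), fun t hT => ?_⟩
  have ht2 : 2 ≤ t := ((le_max_left _ _).trans (le_max_left _ _)).trans hT
  have htT : T₀ ≤ t := ((le_max_right _ _).trans (le_max_left _ _)).trans hT
  have hte : e⁻¹ ≤ t := ((le_max_left _ _).trans (le_max_right _ _)).trans hT
  have hte2 : e⁻¹ ^ 2 ≤ t := ((le_max_right _ _).trans (le_max_right _ _)).trans hT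
  have hl := hT₀ t htT
  have hl1 : 64 ≤ Real.log t := (le_max_left _ _).trans hl
  have hl2 : (k + d + 1) ^ 2 + 4 * Real.log e ≤ Real.log t := (le_max_right _ _).trans hl
  have ht0 : 0 < t := by linarith
  have hi : 0 < t⁻¹ := by positivity
  have hie : t⁻¹ ≤ e := by
    rw [inv_le_comm₀ ht0 he]; exact hte
  constructor
  · set s := Real.sqrt t with hs
    have hs0 : 0 < s := Real.sqrt_pos.2 ht0
    have hss : s * s = t := Real.mul_self_sqrt ht0.le
    have hs1 : 1 ≤ s := Real.one_le_sqrt.2 (by linarith)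
    have hse : s⁻¹ ≤ e := by
      rw [inv_le_comm₀ hs0 he]
      exact Real.le_sqrt_of_sq_le hte2
    have hts : t⁻¹ ≤ s⁻¹ := by
      gcongr
      nlinarith
    -- `H` is an explicit primitive of a minorant: `-cos u / u` is, up to the integrable `1/u²`,
    -- at least the derivative of `-sin u / u`, so the oscillation costs only a bounded amount.
    set H : ℝ → ℝ := fun r => Real.exp (-k) ^ 2 *
      (7 / 16 * Real.log r - 1 / 2 * (Real.sin (r * t) / (r * t) - (r * t)⁻¹)) with hH
    set H' : ℝ → ℝ := fun r => Real.exp (-k) ^ 2 *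
      (7 / 16 * r⁻¹ - 1 / 2 * ((Real.cos (r * t) * t * (r * t) - Real.sin (r * t) * t) / (r * t) ^ 2
        - (-t / (r * t) ^ 2))) with hH'
    have hpos : ∀ r ∈ Set.uIcc t⁻¹ s⁻¹, 0 < r := fun r hr => by
      rw [Set.uIcc_of_le hts] at hr; exact hi.trans_le hr.1
    have hder : ∀ r ∈ Set.uIcc t⁻¹ s⁻¹, HasDerivAt H (H' r) r := fun r hr => by
      have hr0 := hpos r hr
      have hrt : r * t ≠ 0 := by positivity
      have hm : HasDerivAt (fun r : ℝ => r * t) t r := by simpa using (hasDerivAt_id r).mul_const t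
      exact (((Real.hasDerivAt_log hr0.ne').const_mul _).sub
        (((hm.sin.div hm hrt).sub (hm.inv hrt)).const_mul _)).const_mul _
    have hint : IntervalIntegrable H' volume t⁻¹ s⁻¹ := by
      apply ContinuousOn.intervalIntegrable
      intro r hr
      have hr0 := hpos r hr
      have hrt : r * t ≠ 0 := by positivity
      apply ContinuousAt.continuousWithinAt
      simp only [hH']
      fun_prop (disch := first | positivity | exact hr0.ne')
    have key := integral_le_radDens (k := k) (d := d) (p := -1) (t := t) (e := e) hk hd
      (by norm_num) (by linarith) hi hts hse hint ?_
    · rw [intervalIntegral.integral_eq_sub_of_hasDerivAt hder hint] at key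
      refine le_trans ?_ key
      have e1 : t⁻¹ * t = 1 := inv_mul_cancel₀ ht0.ne'
      have e2 : s⁻¹ * t = s := by rw [← hss]; field_simp
      have e3 : Real.log s = Real.log t / 2 := Real.log_sqrt ht0.le
      simp only [hH, e1, e2, Real.log_inv, e3]
      rw [← mul_sub, mul_assoc]
      gcongr
      have hs' : Real.sin s / s ≤ 1 := by
        rw [div_le_one hs0]; linarith [Real.sin_le_one s]
      have hs'' : 0 < s⁻¹ := by positivity
      have := Real.neg_one_le_sin 1
      norm_num
      linarith
    · rintro r ⟨h1, h2⟩
      have hr0 : 0 < r := hi.trans_le h1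
      have hrs : r * s ≤ 1 := by
        have := mul_le_mul_of_nonneg_right h2 hs0.le
        rwa [inv_mul_cancel₀ hs0.ne'] at this
      have hr2 : r ^ 2 * t ≤ 1 := by
        rw [← hss]
        have : 0 ≤ r * s := by positivity
        nlinarith
      have hrt : 0 < r * t := by positivity
      have hlow := exp_mul_le_symNum (k := k) (d := d) (t := t) (r := r) hkd ht0.le
      have hexp : Real.exp (-k) ≤ Real.exp (-k * r ^ 2 * t) := Real.exp_le_exp.2 (by nlinarith)
      have hc1 := Real.cos_le_one (r * t)
      have hcm := Real.neg_one_le_cos (r * t)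
      set c := Real.cos (r * t) with hc
      have hm1 : 0 ≤ 1 - max c 0 := by
        rw [sub_nonneg]; exact max_le hc1 zero_le_one
      have hN : Real.exp (-k) * (1 - max c 0) ≤ symNum k d t r :=
        (mul_le_mul_of_nonneg_right hexp hm1).trans hlow
      have hN2 := pow_le_pow_left₀ (by positivity) hN 2
      -- The tangent line of `(1 - c)²` at `c = 3/4` also lies below `1` at `c = -1`.
      have htan : 7 / 16 - 1 / 2 * c ≤ (1 - max c 0) ^ 2 := by
        rcases le_total c 0 with h | h
        · rw [max_eq_right h]; nlinarith
        · rw [max_eq_left h]; nlinarith [sq_nonneg (c - 3 / 4)]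
      have hsin := Real.sin_le_one (r * t)
      have hHle : H' r ≤ r⁻¹ * (Real.exp (-k) ^ 2 * (7 / 16 - 1 / 2 * c)) := by
        have hq : H' r = r⁻¹ * (Real.exp (-k) ^ 2 * (7 / 16 - 1 / 2 * c))
            - Real.exp (-k) ^ 2 * (1 / 2 * (t * (1 - Real.sin (r * t)) / (r * t) ^ 2)) := by
          simp only [hH', ← hc]
          field_simp
          ring
        rw [hq]
        have : 0 ≤ Real.exp (-k) ^ 2 * (1 / 2 * (t * (1 - Real.sin (r * t)) / (r * t) ^ 2)) := by
          have : 0 ≤ 1 - Real.sin (r * t) := by linarith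
          positivity
        linarith
      refine hHle.trans ?_
      unfold radDens
      rw [zpow_neg_one]
      gcongr
      refine le_trans ?_ hN2
      rw [mul_pow]
      gcongr
  · refine (radDens_integral_split hk hd hkd (by norm_num) (by linarith) hie).trans ?_
    have hz : ∫ r in t⁻¹..e, r ^ (-1 : ℤ) = Real.log e + Real.log t := by
      simp only [zpow_neg_one]
      rw [integral_inv_of_pos hi he, div_inv_eq_mul, Real.log_mul he.ne' ht0.ne']
    rw [hz]
    norm_num
    linarith

/-- For `p ≥ 0` the diffusive scale `r ~ t^{-1/2}` dominates. -/
lemma radDens_integral_diffusive {k d : ℝ} (hk : 0 < k) (hkd : k < d) (q : ℕ) {e : ℝ}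
    (he : 0 < e) :
    ∃ A B T : ℝ, 0 < A ∧ 0 < B ∧ 2 ≤ T ∧ ∀ t : ℝ, T ≤ t →
      A * t ^ (-((q : ℝ) + 1) / 2) ≤ ∫ r in (0 : ℝ)..e, radDens k d q t r ∧
      ∫ r in (0 : ℝ)..e, radDens k d q t r ≤ B * t ^ (-((q : ℝ) + 1) / 2) := by
  have hd : 0 < d := hk.trans hkd
  have hgap : 0 < 1 - Real.exp (-(d - k)) := by
    rw [sub_pos]; exact Real.exp_lt_one_iff.2 (by linarith)
  have hG : 0 < Real.Gamma (((q : ℝ) + 1) / 2) := Real.Gamma_pos_of_pos (by positivity)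
  refine ⟨(Real.exp (-(4 * k)) * (1 - Real.exp (-(d - k)))) ^ 2,
    4 * ((2 * k) ^ (-((q : ℝ) + 1) / 2) * (1 / 2) * Real.Gamma (((q : ℝ) + 1) / 2)),
    max 2 ((2 / e) ^ 2), by positivity, by positivity, le_max_left _ _, fun t hT => ?_⟩
  have ht2 : 2 ≤ t := (le_max_left _ _).trans hT
  have hte : (2 / e) ^ 2 ≤ t := (le_max_right _ _).trans hT
  have ht0 : 0 < t := by linarith
  constructor
  · set s := Real.sqrt t with hs
    have hs0 : 0 < s := Real.sqrt_pos.2 ht0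
    have hss : s * s = t := Real.mul_self_sqrt ht0.le
    have hse : 2 / s ≤ e := by
      have : 2 / e ≤ s := Real.le_sqrt_of_sq_le hte
      rw [div_le_iff₀ he] at this
      rw [div_le_iff₀ hs0]; linarith
    -- On `[1/√t, 2/√t]` the difference of the two heat factors is bounded below.
    have key := integral_le_radDens (k := k) (d := d) (p := (q : ℤ)) (t := t) (a := 1 / s)
      (b := 2 / s) (e := e) hk hd (by omega) (by linarith) (by positivity)
      (by gcongr; norm_num) hse
      (f := fun _ => (1 / s) ^ q * (Real.exp (-(4 * k)) * (1 - Real.exp (-(d - k)))) ^ 2)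
      (by simp) ?_
    · refine le_trans (le_of_eq ?_) key
      have hpw : t ^ (-((q : ℝ) + 1) / 2) = (1 / s) ^ (q + 1) := by
        rw [one_div, hs, Real.sqrt_eq_rpow, ← Real.rpow_neg ht0.le, ← Real.rpow_natCast,
          ← Real.rpow_mul ht0.le]
        congr 1; push_cast; ring
      rw [hpw, intervalIntegral.integral_const, smul_eq_mul]
      ring
    · rintro r ⟨h1, h2⟩
      have hr0 : 0 < r := lt_of_lt_of_le (by positivity) h1
      have h1' : 1 ≤ r * s := (div_le_iff₀ hs0).1 h1
      have h2' : r * s ≤ 2 := (le_div_iff₀ hs0).1 h2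
      have hx : r ^ 2 * t = (r * s) ^ 2 := by rw [← hss]; ring
      have hx1 : 1 ≤ r ^ 2 * t := by rw [hx]; nlinarith
      have hx4 : r ^ 2 * t ≤ 4 := by rw [hx]; nlinarith
      have hN : Real.exp (-(4 * k)) * (1 - Real.exp (-(d - k))) ≤ symNum k d t r := by
        have e1 : Real.exp (-(4 * k)) ≤ Real.exp (-k * r ^ 2 * t) :=
          Real.exp_le_exp.2 (by nlinarith)
        have e2 : Real.exp (-(d - k) * (r ^ 2 * t)) ≤ Real.exp (-(d - k)) :=
          Real.exp_le_exp.2 (by nlinarith)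
        have e3 : Real.exp (-d * r ^ 2 * t) =
            Real.exp (-k * r ^ 2 * t) * Real.exp (-(d - k) * (r ^ 2 * t)) := by
          rw [← Real.exp_add]; congr 1; ring
        have e4 := Real.exp_pos (-d * r ^ 2 * t)
        have e5 := Real.cos_le_one (r * t)
        calc _ ≤ Real.exp (-k * r ^ 2 * t) * (1 - Real.exp (-(d - k) * (r ^ 2 * t))) := by
              gcongr
          _ = Real.exp (-k * r ^ 2 * t) - Real.exp (-d * r ^ 2 * t) := by rw [e3]; ring
          _ ≤ _ := by unfold symNum; nlinarith
      unfold radDens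
      rw [zpow_natCast]
      gcongr
  · have hq1 : (-1 : ℝ) < q := by have : (0 : ℝ) ≤ q := q.cast_nonneg
                                  linarith
    have hb : 0 < 2 * k * t := by positivity
    have hI := integrableOn_rpow_mul_exp_neg_mul_rpow (p := 2) (s := q) hq1 (by norm_num) hb
    have hval := integral_rpow_mul_exp_neg_mul_rpow (p := 2) (q := q) (by norm_num) hq1 hb
    rw [intervalIntegral.integral_of_le he.le]
    calc ∫ r in Set.Ioc 0 e, radDens k d q t r
        ≤ ∫ r in Set.Ioc 0 e, 4 * (r ^ (q : ℝ) * Real.exp (-(2 * k * t) * r ^ (2 : ℝ))) := by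
          refine setIntegral_mono_on ?_ ?_ measurableSet_Ioc fun r hr => ?_
          · exact (intervalIntegrable_iff_integrableOn_Ioc_of_le he.le).1
              (radDens_intervalIntegrable hk hd (by omega) (by linarith) le_rfl he.le)
          · exact (hI.mono_set Set.Ioc_subset_Ioi_self).const_mul 4
          · unfold radDens
            have := symNum_sq_le_exp (k := k) (d := d) (r := r) hkd ht0.le
            have hr0 := hr.1
            rw [zpow_natCast, Real.rpow_natCast, Real.rpow_two, mul_left_comm]
            gcongr
      _ ≤ ∫ r in Set.Ioi 0, 4 * (r ^ (q : ℝ) * Real.exp (-(2 * k * t) * r ^ (2 : ℝ))) := by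
          refine setIntegral_mono_set (hI.const_mul 4) ?_
            (Filter.Eventually.of_forall Set.Ioc_subset_Ioi_self)
          refine (ae_restrict_iff' measurableSet_Ioi).2 (Filter.Eventually.of_forall fun r hr => ?_)
          have hr0 : (0 : ℝ) < r := hr
          simp only [Pi.zero_apply]
          positivity
      _ = _ := by
          rw [integral_const_mul, hval, Real.mul_rpow (by positivity) ht0.le]
          ring

/-! ### Polar coordinates and the rates -/

/-- Integration in polar coordinates over the ball of radius `e`. -/
lemma integral_closedBall_norm {n : ℕ} (hn : 1 ≤ n) {e : ℝ} (he : 0 < e) (f : ℝ → ℝ) :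
    ∫ ξ in Metric.closedBall (0 : EuclideanSpace ℝ (Fin n)) e, f ‖ξ‖ =
      (n * volume.real (Metric.ball (0 : EuclideanSpace ℝ (Fin n)) 1)) *
        ∫ r in (0 : ℝ)..e, r ^ (n - 1) * f r := by
  have : Nonempty (Fin n) := ⟨⟨0, hn⟩⟩
  have hball : ∀ ξ : EuclideanSpace ℝ (Fin n),
      (Metric.closedBall (0 : EuclideanSpace ℝ (Fin n)) e).indicator (fun ξ => f ‖ξ‖) ξ =
        (Set.Iic e).indicator f ‖ξ‖ := fun ξ => by
    simp [Set.indicator]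
  rw [← integral_indicator Metric.isClosed_closedBall.measurableSet]
  simp_rw [hball]
  rw [integral_fun_norm_addHaar, intervalIntegral.integral_of_le he.le, finrank_euclideanSpace_fin,
    nsmul_eq_mul, smul_eq_mul, mul_assoc]
  congr 2
  rw [← Set.Ioi_inter_Iic, ← setIntegral_indicator measurableSet_Iic]
  refine setIntegral_congr_fun measurableSet_Ioi fun r _ => ?_
  by_cases h : r ≤ e <;> simp [Set.indicator, h]

/-- Two-sided bounds pass from a quantity to its square root. -/
lemma sqrt_two_sided {V A B R D J I : ℝ} (hV : 0 ≤ V) (hD : 0 ≤ D)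
    (hDR : D ^ 2 = R) (hI : I = V * J) (h1 : A * R ≤ J) (h2 : J ≤ B * R) :
    Real.sqrt (V * A) * D ≤ Real.sqrt I ∧ Real.sqrt I ≤ Real.sqrt (V * B) * D := by
  have hs : ∀ C : ℝ, Real.sqrt (V * C) * D = Real.sqrt (V * (C * R)) := fun C => by
    rw [← hDR, ← mul_assoc, Real.sqrt_mul' _ (sq_nonneg D), Real.sqrt_sq hD]
  rw [hs, hs, hI]
  constructor <;> gcongr

lemma rpow_half_sq {x : ℝ} (hx : 0 ≤ x) : (x ^ ((1 : ℝ) / 2)) ^ 2 = x := by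
  rw [← Real.sqrt_eq_rpow, Real.sq_sqrt hx]

/-- The weight `r²|Ĝ₀|²` corresponds to the exponent `p = n - 3`. -/
lemma radDens_bounds_one {n : ℕ} (hn : 1 ≤ n) {k d : ℝ} (hk : 0 < k) (hkd : k < d) {e : ℝ}
    (he : 0 < e) :
    ∃ A B T : ℝ, 0 < A ∧ 0 < B ∧ 2 ≤ T ∧ ∀ t : ℝ, T ≤ t →
      A * D1rate n t ^ 2 ≤ ∫ r in (0 : ℝ)..e, radDens k d ((n : ℤ) - 3) t r ∧
      ∫ r in (0 : ℝ)..e, radDens k d ((n : ℤ) - 3) t r ≤ B * D1rate n t ^ 2 := by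
  have hcase : n = 1 ∨ n = 2 ∨ 3 ≤ n := by omega
  rcases hcase with rfl | rfl | h3
  · obtain ⟨A, B, T, hA, hB, hT, H⟩ :=
      radDens_integral_singular hk hkd (p := -2) (by norm_num) le_rfl he
    refine ⟨A, B, T, hA, hB, hT, fun t ht => ?_⟩
    have : D1rate 1 t ^ 2 = t ^ (-((-2 : ℤ) + 1)) := by
      rw [D1rate, if_pos rfl, rpow_half_sq (by linarith)]; norm_num
    rw [this]
    exact H t ht
  · obtain ⟨A, B, T, hA, hB, hT, H⟩ := radDens_integral_critical hk hkd he
    refine ⟨A, B, T, hA, hB, hT, fun t ht => ?_⟩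
    have : D1rate 2 t ^ 2 = Real.log t := by
      rw [D1rate, if_neg (by norm_num), if_pos rfl,
        rpow_half_sq (Real.log_nonneg (by linarith))]
    rw [this]
    exact H t ht
  · obtain ⟨q, rfl⟩ := Nat.exists_eq_add_of_le h3
    obtain ⟨A, B, T, hA, hB, hT, H⟩ := radDens_integral_diffusive hk hkd q he
    refine ⟨A, B, T, hA, hB, hT, fun t ht => ?_⟩
    have : D1rate (3 + q) t ^ 2 = t ^ (-((q : ℝ) + 1) / 2) := by
      rw [D1rate, if_neg (by omega), if_neg (by omega), ← Real.rpow_natCast,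
        ← Real.rpow_mul (by linarith)]
      congr 1; push_cast; ring
    have hp : ((3 + q : ℕ) : ℤ) - 3 = q := by push_cast; ring
    rw [this, hp]
    exact H t ht

/-- The weight `|Ĝ₀|²` corresponds to the exponent `p = n - 5`. -/
lemma radDens_bounds_two {n : ℕ} (hn : 1 ≤ n) {k d : ℝ} (hk : 0 < k) (hkd : k < d) {e : ℝ}
    (he : 0 < e) :
    ∃ A B T : ℝ, 0 < A ∧ 0 < B ∧ 2 ≤ T ∧ ∀ t : ℝ, T ≤ t →
      A * D2rate n t ^ 2 ≤ ∫ r in (0 : ℝ)..e, radDens k d ((n : ℤ) - 5) t r ∧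
      ∫ r in (0 : ℝ)..e, radDens k d ((n : ℤ) - 5) t r ≤ B * D2rate n t ^ 2 := by
  have hcase : n ≤ 3 ∨ n = 4 ∨ 5 ≤ n := by omega
  rcases hcase with h | rfl | h5
  · obtain ⟨A, B, T, hA, hB, hT, H⟩ :=
      radDens_integral_singular hk hkd (p := (n : ℤ) - 5) (by omega) (by omega) he
    refine ⟨A, B, T, hA, hB, hT, fun t ht => ?_⟩
    have : D2rate n t ^ 2 = t ^ (-(((n : ℤ) - 5) + 1)) := by
      rw [D2rate, if_pos h, ← Real.rpow_natCast, ← Real.rpow_mul (by linarith),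
        ← Real.rpow_intCast]
      congr 1; push_cast; ring
    rw [this]
    exact H t ht
  · obtain ⟨A, B, T, hA, hB, hT, H⟩ := radDens_integral_critical hk hkd he
    refine ⟨A, B, T, hA, hB, hT, fun t ht => ?_⟩
    have : D2rate 4 t ^ 2 = Real.log t := by
      rw [D2rate, if_neg (by norm_num), if_pos rfl,
        rpow_half_sq (Real.log_nonneg (by linarith))]
    rw [this]
    exact H t ht
  · obtain ⟨q, rfl⟩ := Nat.exists_eq_add_of_le h5
    obtain ⟨A, B, T, hA, hB, hT, H⟩ := radDens_integral_diffusive hk hkd q he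
    refine ⟨A, B, T, hA, hB, hT, fun t ht => ?_⟩
    have : D2rate (5 + q) t ^ 2 = t ^ (-((q : ℝ) + 1) / 2) := by
      rw [D2rate, if_neg (by omega), if_neg (by omega), ← Real.rpow_natCast,
        ← Real.rpow_mul (by linarith)]
      congr 1; push_cast; ring
    have hp : ((5 + q : ℕ) : ℤ) - 5 = q := by push_cast; ring
    rw [this, hp]
    exact H t ht

lemma D1rate_nonneg {n : ℕ} {t : ℝ} (ht : 1 ≤ t) : 0 ≤ D1rate n t := by
  have := Real.log_nonneg ht
  unfold D1rate
  split_ifs <;> positivity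

lemma D2rate_nonneg {n : ℕ} {t : ℝ} (ht : 1 ≤ t) : 0 ≤ D2rate n t := by
  have := Real.log_nonneg ht
  unfold D2rate
  split_ifs <;> positivity

lemma integral_one_eq {n : ℕ} (hn : 1 ≤ n) {e : ℝ} (he : 0 < e) (k δ t : ℝ) :
    ∫ ξ in Metric.closedBall (0 : EuclideanSpace ℝ (Fin n)) e, ‖ξ‖ ^ 2 * Ghat0 k δ t ‖ξ‖ ^ 2 =
      (n * volume.real (Metric.ball (0 : EuclideanSpace ℝ (Fin n)) 1)) *
        ∫ r in (0 : ℝ)..e, radDens k (δ / 2) ((n : ℤ) - 3) t r := by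
  rw [integral_closedBall_norm hn he (fun r => r ^ 2 * Ghat0 k δ t r ^ 2),
    intervalIntegral.integral_of_le he.le, intervalIntegral.integral_of_le he.le]
  congr 1
  refine setIntegral_congr_fun measurableSet_Ioc fun r hr => ?_
  have hr0 : r ≠ 0 := hr.1.ne'
  have hp : r ^ ((n : ℤ) - 3) = r ^ (n - 1) * (r ^ 2)⁻¹ := by
    rw [← zpow_natCast, ← zpow_natCast, ← zpow_neg, ← zpow_add₀ hr0]
    congr 1; omega
  simp only [radDens, symNum, Ghat0, hp]
  field_simp

lemma integral_two_eq {n : ℕ} (hn : 1 ≤ n) {e : ℝ} (he : 0 < e) (k δ t : ℝ) :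
    ∫ ξ in Metric.closedBall (0 : EuclideanSpace ℝ (Fin n)) e, Ghat0 k δ t ‖ξ‖ ^ 2 =
      (n * volume.real (Metric.ball (0 : EuclideanSpace ℝ (Fin n)) 1)) *
        ∫ r in (0 : ℝ)..e, radDens k (δ / 2) ((n : ℤ) - 5) t r := by
  rw [integral_closedBall_norm hn he (fun r => Ghat0 k δ t r ^ 2),
    intervalIntegral.integral_of_le he.le, intervalIntegral.integral_of_le he.le]
  congr 1
  refine setIntegral_congr_fun measurableSet_Ioc fun r hr => ?_
  have hr0 : r ≠ 0 := hr.1.ne'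
  have hp : r ^ ((n : ℤ) - 5) = r ^ (n - 1) * (r ^ 4)⁻¹ := by
    rw [← zpow_natCast, ← zpow_natCast, ← zpow_neg, ← zpow_add₀ hr0]
    congr 1; omega
  simp only [radDens, symNum, Ghat0, hp]
  field_simp

theorem Ghat0_L2_optimal
    (n : ℕ) (hn : 1 ≤ n) (ε₀ κ δ : ℝ) (hε : 0 < ε₀)
    (hκ : 0 < κ) (hδ : 0 < δ) (hκδ : 2 * κ < δ) :
    ∃ C₁ C₂ T : ℝ, 0 < C₁ ∧ 0 < C₂ ∧ 2 ≤ T ∧ ∀ t : ℝ, T ≤ t →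
      (C₁ * D1rate n t ≤
        Real.sqrt (∫ ξ in Metric.closedBall (0 : EuclideanSpace ℝ (Fin n)) ε₀,
          ‖ξ‖ ^ 2 * Ghat0 κ δ t ‖ξ‖ ^ 2) ∧
       Real.sqrt (∫ ξ in Metric.closedBall (0 : EuclideanSpace ℝ (Fin n)) ε₀,
          ‖ξ‖ ^ 2 * Ghat0 κ δ t ‖ξ‖ ^ 2) ≤ C₂ * D1rate n t) ∧
      (C₁ * D2rate n t ≤
        Real.sqrt (∫ ξ in Metric.closedBall (0 : EuclideanSpace ℝ (Fin n)) ε₀,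
          Ghat0 κ δ t ‖ξ‖ ^ 2) ∧
       Real.sqrt (∫ ξ in Metric.closedBall (0 : EuclideanSpace ℝ (Fin n)) ε₀,
          Ghat0 κ δ t ‖ξ‖ ^ 2) ≤ C₂ * D2rate n t) := by
  have hkd : κ < δ / 2 := by linarith
  obtain ⟨A, B, T, hA, hB, hT, H⟩ := radDens_bounds_one hn hκ hkd hε
  obtain ⟨A', B', T', hA', hB', hT', H'⟩ := radDens_bounds_two hn hκ hkd hε
  have hvol : 0 < volume.real (Metric.ball (0 : EuclideanSpace ℝ (Fin n)) 1) :=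
    ENNReal.toReal_pos (Metric.measure_ball_pos _ _ one_pos).ne' measure_ball_lt_top.ne
  have hn0 : (0 : ℝ) < n := by exact_mod_cast hn
  have hV := mul_pos hn0 hvol
  set V := (n : ℝ) * volume.real (Metric.ball (0 : EuclideanSpace ℝ (Fin n)) 1)
  refine ⟨min √(V * A) √(V * A'), max √(V * B) √(V * B'), max T T',
    lt_min (by positivity) (by positivity), lt_max_of_lt_left (by positivity),
    hT.trans (le_max_left _ _), fun t ht => ?_⟩
  have h1 := H t ((le_max_left _ _).trans ht)
  have h2 := H' t ((le_max_right _ _).trans ht)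
  have ht1 : 1 ≤ t := by linarith [(le_max_left T T').trans ht]
  have hD1 : 0 ≤ D1rate n t := D1rate_nonneg ht1
  have hD2 : 0 ≤ D2rate n t := D2rate_nonneg ht1
  have r1 := sqrt_two_sided hV.le hD1 rfl (integral_one_eq hn hε κ δ t) h1.1 h1.2
  have r2 := sqrt_two_sided hV.le hD2 rfl (integral_two_eq hn hε κ δ t) h2.1 h2.2
  exact ⟨⟨(mul_le_mul_of_nonneg_right (min_le_left _ _) hD1).trans r1.1,
      r1.2.trans (mul_le_mul_of_nonneg_right (le_max_left _ _) hD1)⟩,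
    ⟨(mul_le_mul_of_nonneg_right (min_le_right _ _) hD2).trans r2.1,
      r2.2.trans (mul_le_mul_of_nonneg_right (le_max_right _ _) hD2)⟩⟩

end
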